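/- Let ξ and η be jointly stationary and ergodic random measures on ℝ^d with positive finite intensities, where η is discrete with a.s. locally finite support and its support point process η* also has positive finite intensity. If an allocation τ has appetite α for some α ∈ (0, λ_ξ λ_η^{-1}], then λ_ξ · P_ξ(τ(0) ≠ ∞) = α λ_η, where P_ξ is the Palm probability measure of ξ. -/

import Mathlib

/-!
Since `τ` is equivariant, `λ_ξ P_ξ(τ(0) ≠ ∞)` is the expected `ξ`-mass in the unit cube `Q` that is
allocated at all. By the mass transport principle (`mass_transport`, applied to the Campbell measure
of `ξ`) this equals the expected `ξ`-mass allocated into `Q`. Almost surely the latter mass is the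
sum of `ξ(C^τ(y))` over the atoms `y ∈ Q` of `η` (`measure_alloc_eq_tsum`), each term being at most
`α η{y}`, so the expectation is at most `α λ_η`.

The event that some `ξ`-mass is sent to `∞` is invariant up to null sets, so it has probability
`0` or `1` (`prob_eq_zero_or_one_of_ae_invariant`). If it has probability `1`, almost surely no atom
is unsated, all the bounds `ξ(C^τ(y)) ≤ α η{y}` are equalities, and the expectation is `α λ_η`. If it
has probability `0`, the expectation is `λ_ξ`, which is at least `α λ_η` by the choice of `α` and at
most `α λ_η` by the general bound.

Fubini arguments need an s-finite kernel, whereas a random measure is only a.s. locally finite;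
`exists_sfinite_kernel` supplies a suitable version of `ξ`.
-/

open MeasureTheory ENNReal

noncomputable section

/-- Measurable structure on `Option α`; the point `∞` is modeled by `none`. -/
instance {α : Type*} [MeasurableSpace α] : MeasurableSpace (Option α) :=
  MeasurableSpace.map some inferInstance

namespace Paper

variable {Ω : Type*} [MeasurableSpace Ω]
variable {G : Type*} [MeasurableSpace G] [TopologicalSpace G] [AddCommGroup G]

/-- A measurable flow `(θ_x)_{x ∈ G}` on `Ω`. -/
structure IsMeasurableFlow (θ : G → Ω → Ω) : Prop where
  measurable : Measurable fun p : G × Ω => θ p.1 p.2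
  id_eq : θ 0 = id
  comp : ∀ x y : G, θ x ∘ θ y = θ (x + y)

/-- `P` is stationary under the flow `θ`. -/
def IsStationary (P : Measure Ω) (θ : G → Ω → Ω) : Prop :=
  ∀ x : G, P.map (θ x) = P

/-- `P` is ergodic under the flow `θ`: invariant events are trivial. -/
def IsErgodicFlow (P : Measure Ω) (θ : G → Ω → Ω) : Prop :=
  ∀ A : Set Ω, MeasurableSet A → (∀ x : G, θ x ⁻¹' A = A) → P A = 0 ∨ P A = 1

/-- A random measure: a measurable kernel which is a.s. locally finite
(finite on compact sets). -/
def IsRandomMeasure (P : Measure Ω) (ξ : Ω → Measure G) : Prop :=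
  (∀ s : Set G, MeasurableSet s → Measurable fun ω => ξ ω s) ∧
    ∀ᵐ ω ∂P, ∀ K : Set G, IsCompact K → ξ ω K < ∞

/-- Flow-invariance (`joint stationarity`) of a random measure:
`ξ(θ_x ω, C − x) = ξ(ω, C)`. -/
def IsFlowInvariant (P : Measure Ω) (θ : G → Ω → Ω) (ξ : Ω → Measure G) : Prop :=
  ∀ x : G, ∀ᵐ ω ∂P, ξ (θ x ω) = (ξ ω).map (fun y => y - x)

/-- A diffuse (non-atomic) random measure. -/
def IsDiffuseRM (P : Measure Ω) (ξ : Ω → Measure G) : Prop :=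
  ∀ᵐ ω ∂P, ∀ x : G, ξ ω {x} = 0

/-- A discrete (purely atomic) random measure: a.s. carried by a countable set. -/
def IsDiscreteRM (P : Measure Ω) (ξ : Ω → Measure G) : Prop :=
  ∀ᵐ ω ∂P, ∃ s : Set G, s.Countable ∧ ξ ω sᶜ = 0

/-- A locally finite set of points. -/
def LocallyFiniteSet (s : Set G) : Prop :=
  ∀ x : G, ∃ U ∈ nhds x, (s ∩ U).Finite

/-- A simple point process: a.s. the counting measure of a locally finite set. -/
def IsSimplePointProcess (P : Measure Ω) (χ : Ω → Measure G) : Prop :=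
  ∀ᵐ ω ∂P, ∃ s : Set G, LocallyFiniteSet s ∧ χ ω = Measure.count.restrict s

/-- An allocation: a jointly measurable, translation-equivariant map
`Ω × G → G ∪ {∞}`, where `∞` is modeled by `none`. -/
def IsAllocation (P : Measure Ω) (θ : G → Ω → Ω) (τ : Ω → G → Option G) : Prop :=
  Measurable (fun p : Ω × G => τ p.1 p.2) ∧
    ∀ᵐ ω ∂P, ∀ x y : G, τ (θ y ω) (x - y) = Option.map (fun z => z - y) (τ ω x)

/-- `τ` balances `ξ` and `η`: a.s. no `ξ`-mass is sent to `∞` and the image of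
`ξ(ω)` under `τ(ω, ·)` is `η(ω)`. -/
def Balances (P : Measure Ω) (ξ η : Ω → Measure G) (τ : Ω → G → Option G) : Prop :=
  ∀ᵐ ω ∂P, ξ ω {z | τ ω z = none} = 0 ∧
    ∀ C : Set G, MeasurableSet C → ξ ω {z | ∃ y ∈ C, τ ω z = some y} = η ω C

/-- Euclidean space `ℝ^d`. -/
abbrev Rd (d : ℕ) := EuclideanSpace ℝ (Fin d)

/-- The unit cube `[0,1]^d`. -/
def unitCube (d : ℕ) : Set (Rd d) := {x | ∀ i, x i ∈ Set.Icc (0 : ℝ) 1}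

/-- The intensity `λ_ξ = E ξ([0,1]^d)` of a random measure on `ℝ^d`. -/
def intensity {d : ℕ} (P : Measure Ω) (ξ : Ω → Measure (Rd d)) : ℝ≥0∞ :=
  ∫⁻ ω, ξ ω (unitCube d) ∂P


variable {Ω : Type*} [MeasurableSpace Ω]
variable {G : Type*} [MeasurableSpace G] [TopologicalSpace G] [AddCommGroup G]

/-- The allocation cell `C^τ(x) = {y : τ(y) = x}`. -/
def allocCell (τ : Ω → G → Option G) (ω : Ω) (x : G) : Set G := {y | τ ω y = some x}

/-- The support point process `η*` of a discrete random measure `η`: the simple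
point process with the same support as `η`. -/
def supportPP (η : Ω → Measure G) (ω : Ω) : Measure G :=
  Measure.count.restrict {x | η ω {x} ≠ 0}

/-- The allocation `τ` has appetite `α` with respect to `(ξ, η)`:
(i) a.s. `ξ`-almost no site is allocated to a point outside `supp η ∪ {∞}`;
(ii) a.s. no atom of `η` receives `ξ`-mass more than `α·η{x}`;
(iii) with probability one, it is not the case that simultaneously some
`ξ`-mass is allocated to `∞` and some atom of `η` is unsated. -/
def HasAppetite (P : Measure Ω) (ξ η : Ω → Measure G) (τ : Ω → G → Option G)
    (α : ℝ≥0∞) : Prop :=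
  (∀ᵐ ω ∂P, ξ ω {z | ∃ y, τ ω z = some y ∧ η ω {y} = 0} = 0) ∧
  (∀ᵐ ω ∂P, supportPP η ω {x | α * η ω {x} < ξ ω (allocCell τ ω x)} = 0) ∧
  P {ω | 0 < ξ ω {z | τ ω z = none} ∧
      0 < supportPP η ω {x | ξ ω (allocCell τ ω x) < α * η ω {x}}} = 0

/-- The Palm probability of an event `A` with respect to the random measure `ξ`
(using the unit cube `[0,1]^d` as the window `B`, which has Lebesgue measure 1):
`P_ξ(A) = λ_ξ⁻¹ λ_d(B)⁻¹ E ∫ 1_B(x) 1_A(θ_x ω) ξ(ω, dx)`. -/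
def palmProb {d : ℕ} {Ω : Type*} [MeasurableSpace Ω] (P : Measure Ω)
    (θ : Rd d → Ω → Ω) (ξ : Ω → Measure (Rd d)) (A : Set Ω) : ℝ≥0∞ :=
  (intensity P ξ)⁻¹ * (volume (unitCube d))⁻¹ *
    ∫⁻ ω, ∫⁻ x in unitCube d, A.indicator (fun _ => (1 : ℝ≥0∞)) (θ x ω) ∂(ξ ω) ∂P

open ProbabilityTheory

/-! ### Preliminaries: s-finite versions, the unit cube, measurability into `Option` -/

/-- A random measure has a version which is an s-finite kernel. Its restrictions to the annuli
`{n ≤ ‖x‖ < n + 1}` are a.s. finite, but finite kernels must be bounded uniformly in `ω`, so each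
restriction is cut further according to the integer part of its total mass. -/
theorem exists_sfinite_kernel {d : ℕ} {Ω : Type*} [MeasurableSpace Ω] {P : Measure Ω}
    {ξ : Ω → Measure (Rd d)} (hξ : IsRandomMeasure P ξ) :
    ∃ κ : Kernel Ω (Rd d), IsSFiniteKernel κ ∧ ∀ᵐ ω ∂P, κ ω = ξ ω := by
  classical
  set S : ℕ → Set (Rd d) := fun n => {x | ⌊‖x‖⌋₊ = n} with hS
  have hSm : ∀ n, MeasurableSet (S n) := fun n =>
    (Nat.measurable_floor.comp measurable_norm) (measurableSet_singleton n)
  have hScomp : ∀ n, S n ⊆ Metric.closedBall 0 (n + 1) := by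
    intro n x hx
    have h := Nat.lt_floor_add_one ‖x‖
    rw [show ⌊‖x‖⌋₊ = n from hx] at h
    simpa using h.le
  have hSd : Pairwise (Function.onFun Disjoint S) := by
    intro i j hij
    refine Set.disjoint_left.2 fun x hi hj => hij ?_
    exact (show ⌊‖x‖⌋₊ = i from hi).symm.trans hj
  have hSu : ⋃ n, S n = Set.univ := by
    ext x; simp [hS]
  let T : ℕ × ℕ → Set Ω := fun p => {ω | ξ ω (S p.1) ≠ ∞ ∧ ⌊(ξ ω (S p.1)).toReal⌋₊ = p.2}
  have hT : ∀ p, MeasurableSet (T p) := fun p => by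
    have h1 := hξ.1 _ (hSm p.1)
    exact (h1 (measurableSet_singleton ∞)).compl.inter
      ((Nat.measurable_floor.comp h1.ennreal_toReal) (measurableSet_singleton p.2))
  let K : ℕ × ℕ → Kernel Ω (Rd d) := fun p =>
    { toFun := fun ω => if ω ∈ T p then (ξ ω).restrict (S p.1) else 0
      measurable' := by
        refine Measurable.ite (hT p) ?_ measurable_const
        refine Measure.measurable_of_measurable_coe _ fun s hs => ?_
        simp_rw [Measure.restrict_apply hs]
        exact hξ.1 _ (hs.inter (hSm _)) }
  have hK : ∀ p ω, K p ω = if ω ∈ T p then (ξ ω).restrict (S p.1) else 0 := fun _ _ => rfl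
  have hKf : ∀ p, IsFiniteKernel (K p) := by
    intro p
    refine ⟨(p.2 : ℝ≥0∞) + 1, by finiteness, fun ω => ?_⟩
    rw [hK]
    split_ifs with h
    · rw [Measure.restrict_apply_univ, ← ENNReal.ofReal_toReal h.1]
      have h2 := Nat.lt_floor_add_one (ξ ω (S p.1)).toReal
      rw [h.2] at h2
      refine (ENNReal.ofReal_le_ofReal h2.le).trans ?_
      rw [ENNReal.ofReal_add (by positivity) zero_le_one]
      simp
    · simp
  refine ⟨Kernel.sum K, inferInstance, ?_⟩
  filter_upwards [hξ.2] with ω hω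
  ext s hs
  rw [Kernel.sum_apply' _ _ hs, ENNReal.tsum_prod']
  have h1 : ∀ n, ∑' k, K (n, k) ω s = (ξ ω).restrict (S n) s := by
    intro n
    have hfin : ξ ω (S n) ≠ ∞ :=
      ((measure_mono (hScomp n)).trans_lt (hω _ (isCompact_closedBall _ _))).ne
    rw [tsum_eq_single ⌊(ξ ω (S n)).toReal⌋₊]
    · rw [hK, if_pos ⟨hfin, rfl⟩]
    · intro k hk
      rw [hK, if_neg fun h => hk h.2.symm]
      simp
  simp_rw [h1]
  rw [← Measure.sum_apply _ hs, ← Measure.restrict_iUnion hSd hSm, hSu, Measure.restrict_univ]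

theorem measurableSet_unitCube (d : ℕ) : MeasurableSet (unitCube d) := by
  have : unitCube d = ⋂ i, (fun x : Rd d => x i) ⁻¹' Set.Icc 0 1 := by
    ext x; simp [unitCube]
  rw [this]
  exact MeasurableSet.iInter fun i =>
    (by fun_prop : Measurable fun x : Rd d => x i) measurableSet_Icc

theorem volume_unitCube (d : ℕ) : volume (unitCube d) = 1 := by
  have h : unitCube d = (MeasurableEquiv.toLp 2 (Fin d → ℝ)).symm ⁻¹' Set.Icc 0 1 := by
    ext x
    simp [unitCube, Set.mem_Icc, Pi.le_def, forall_and]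
  rw [h, (EuclideanSpace.volume_preserving_symm_measurableEquiv_toLp (Fin d)).measure_preimage
    measurableSet_Icc.nullMeasurableSet, Real.volume_Icc_pi]
  simp

theorem measurable_getD {α : Type*} [MeasurableSpace α] (a : α) :
    Measurable fun o : Option α => o.getD a := fun _ hs => hs

theorem measurableSet_option_none {α : Type*} [MeasurableSpace α] :
    MeasurableSet ({none} : Set (Option α)) := by
  change MeasurableSet (some ⁻¹' ({none} : Set (Option α)))
  convert MeasurableSet.empty
  ext; simp

/-! ### Ergodicity for almost invariant events -/

/-- Ergodicity of the flow concerns strictly invariant events; it extends to events that are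
invariant up to an `x`-dependent null set, since such an `A` agrees a.s. with the strictly invariant
event that `θ_x ω ∈ A` for Lebesgue-a.e. `x`. -/
theorem prob_eq_zero_or_one_of_ae_invariant {d : ℕ} {Ω : Type*} [MeasurableSpace Ω]
    {P : Measure Ω} [IsProbabilityMeasure P] {θ : Rd d → Ω → Ω}
    (hflow : IsMeasurableFlow θ) (herg : IsErgodicFlow P θ) {A : Set Ω} (hA : MeasurableSet A)
    (hinv : ∀ x, ∀ᵐ ω ∂P, θ x ω ∈ A ↔ ω ∈ A) : P A = 0 ∨ P A = 1 := by
  have hmeas : Measurable fun p : Ω × Rd d => θ p.2 p.1 := hflow.measurable.comp measurable_swap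
  have hswap : ∀ᵐ ω ∂P, ∀ᵐ x ∂(volume : Measure (Rd d)), (θ x ω ∈ A ↔ ω ∈ A) := by
    have hms : MeasurableSet {p : Ω × Rd d | θ p.2 p.1 ∈ A ↔ p.1 ∈ A} :=
      (hmeas hA).iff (measurable_fst hA)
    exact (Measure.ae_ae_comm (p := fun ω x => θ x ω ∈ A ↔ ω ∈ A) hms).2
      (Filter.Eventually.of_forall hinv)
  let A' : Set Ω := {ω | volume {x | θ x ω ∉ A} = 0}
  have hA' : MeasurableSet A' :=
    (measurable_measure_prodMk_left (ν := (volume : Measure (Rd d))) (hmeas hA.compl))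
      (measurableSet_singleton 0)
  have hAA' : A' =ᵐ[P] A := by
    filter_upwards [hswap] with ω hω
    apply propext
    change (∀ᵐ x ∂(volume : Measure (Rd d)), θ x ω ∈ A) ↔ _
    constructor
    · intro h
      obtain ⟨x, h1, h2⟩ := (h.and hω).exists
      exact h2.1 h1
    · intro h
      filter_upwards [hω] with x hx using hx.2 h
  rw [← measure_congr hAA']
  refine herg A' hA' fun y => ?_
  ext ω
  have : {x | θ x (θ y ω) ∉ A} = (fun x => x + y) ⁻¹' {x | θ x ω ∉ A} := by
    ext x
    simp [← hflow.comp]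
  change volume _ = 0 ↔ volume _ = 0
  rw [this, measure_preimage_add_right]

/-! ### Mass transport -/

/-- Joint stationarity says that the Campbell measure `P ⊗ₘ κ` is invariant under the diagonal
shifts `(ω, z) ↦ (θ_x ω, z - x)`. -/
theorem measurePreserving_skew {d : ℕ} {Ω : Type*} [MeasurableSpace Ω] {P : Measure Ω}
    [IsProbabilityMeasure P] {θ : Rd d → Ω → Ω} (hflow : IsMeasurableFlow θ)
    (hstat : IsStationary P θ) (κ : Kernel Ω (Rd d)) [IsSFiniteKernel κ]
    (hκ : ∀ x, ∀ᵐ ω ∂P, κ (θ x ω) = (κ ω).map (fun y => y - x)) (x : Rd d) :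
    MeasurePreserving (fun p : Ω × Rd d => (θ x p.1, p.2 - x)) (P ⊗ₘ κ) (P ⊗ₘ κ) := by
  have hθ : Measurable (θ x) := hflow.measurable.comp measurable_prodMk_left
  have hΘ : Measurable (fun p : Ω × Rd d => (θ x p.1, p.2 - x)) := by fun_prop
  refine ⟨hΘ, ?_⟩
  ext s hs
  rw [Measure.map_apply hΘ hs, Measure.compProd_apply (hΘ hs), Measure.compProd_apply hs]
  have hmp : MeasurePreserving (θ x) P P := ⟨hθ, hstat x⟩
  rw [← hmp.lintegral_comp (Kernel.measurable_kernel_prodMk_left hs)]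
  refine lintegral_congr_ae ?_
  filter_upwards [hκ x] with ω hω
  rw [hω, Measure.map_apply (by fun_prop) (measurable_prodMk_left hs)]
  rfl

/-- Mass transport principle for a shift-invariant measure `m` on `Ω × ℝ^d` and an equivariant map
`σ` defined on an invariant set `D`: after normalization by volumes, the mass leaving `B` equals the
mass arriving in `C`. By Fubini the two sides are integrals over `x` of
`m {D, z ∈ B, σ + x ∈ C}` and `m {D, z - x ∈ B, σ ∈ C}`, which are exchanged by the shift by `x`. -/
theorem mass_transport {d : ℕ} {Ω : Type*} [MeasurableSpace Ω] {m : Measure (Ω × Rd d)}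
    [SFinite m] {θ : Rd d → Ω → Ω}
    (hm : ∀ x, MeasurePreserving (fun p : Ω × Rd d => (θ x p.1, p.2 - x)) m m)
    {D : Set (Ω × Rd d)} (hD : MeasurableSet D) {σ : Ω × Rd d → Rd d} (hσ : Measurable σ)
    (hinv : ∀ᵐ p ∂m, ∀ x, ((θ x p.1, p.2 - x) ∈ D ↔ p ∈ D) ∧
      (p ∈ D → σ (θ x p.1, p.2 - x) = σ p - x))
    {B C : Set (Rd d)} (hB : MeasurableSet B) (hC : MeasurableSet C) :
    m {p | p ∈ D ∧ p.2 ∈ B} * volume C = m {p | p ∈ D ∧ σ p ∈ C} * volume B := by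
  have hE1 : MeasurableSet {p : Ω × Rd d | p ∈ D ∧ p.2 ∈ B} := hD.inter (measurable_snd hB)
  have hE2 : MeasurableSet {p : Ω × Rd d | p ∈ D ∧ σ p ∈ C} := hD.inter (hσ hC)
  let S1 : Set ((Ω × Rd d) × Rd d) := {q | (q.1 ∈ D ∧ q.1.2 ∈ B) ∧ σ q.1 + q.2 ∈ C}
  let S2 : Set ((Ω × Rd d) × Rd d) := {q | (q.1 ∈ D ∧ σ q.1 ∈ C) ∧ q.1.2 - q.2 ∈ B}
  have hS1 : MeasurableSet S1 := (measurable_fst hE1).inter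
    ((by fun_prop : Measurable fun q : (Ω × Rd d) × Rd d => σ q.1 + q.2) hC)
  have hS2 : MeasurableSet S2 := (measurable_fst hE2).inter
    ((by fun_prop : Measurable fun q : (Ω × Rd d) × Rd d => q.1.2 - q.2) hB)
  have h1 : (m.prod volume) S1 = m {p | p ∈ D ∧ p.2 ∈ B} * volume C := by
    rw [Measure.prod_apply hS1, mul_comm, ← lintegral_indicator_const hE1]
    refine lintegral_congr fun p => ?_
    by_cases hp : p ∈ {p | p ∈ D ∧ p.2 ∈ B}
    · rw [Set.indicator_of_mem hp, ← measure_preimage_add volume (σ p) C]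
      congr 1
      ext x
      exact and_iff_right hp
    · rw [Set.indicator_of_notMem hp]
      convert measure_empty (μ := (volume : Measure (Rd d)))
      exact Set.eq_empty_of_forall_notMem fun x hx => hp hx.1
  have h2 : (m.prod volume) S2 = m {p | p ∈ D ∧ σ p ∈ C} * volume B := by
    rw [Measure.prod_apply hS2, mul_comm, ← lintegral_indicator_const hE2]
    refine lintegral_congr fun p => ?_
    by_cases hp : p ∈ {p | p ∈ D ∧ σ p ∈ C}
    · rw [Set.indicator_of_mem hp, ← (Measure.measurePreserving_sub_left volume p.2).measure_preimage
        hB.nullMeasurableSet]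
      congr 1
      ext x
      exact and_iff_right hp
    · rw [Set.indicator_of_notMem hp]
      convert measure_empty (μ := (volume : Measure (Rd d)))
      exact Set.eq_empty_of_forall_notMem fun x hx => hp hx.1
  rw [← h1, ← h2, Measure.prod_apply_symm hS1, Measure.prod_apply_symm hS2]
  refine lintegral_congr fun x => ?_
  rw [← (hm x).measure_preimage (measurable_prodMk_right hS1).nullMeasurableSet]
  refine measure_congr ?_
  filter_upwards [hinv] with p hp
  apply propext
  change ((_ ∈ D ∧ p.2 - x ∈ B) ∧ σ (θ x p.1, p.2 - x) + x ∈ C) ↔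
    ((p ∈ D ∧ σ p ∈ C) ∧ p.2 - x ∈ B)
  rw [(hp x).1]
  constructor
  · rintro ⟨⟨a, b⟩, c⟩
    rw [(hp x).2 a, sub_add_cancel] at c
    exact ⟨⟨a, c⟩, b⟩
  · rintro ⟨⟨a, b⟩, c⟩
    rw [(hp x).2 a, sub_add_cancel]
    exact ⟨⟨a, c⟩, b⟩

/-! ### Decomposition over the atoms of `η` -/

theorem LocallyFiniteSet.countable {d : ℕ} {s : Set (Rd d)} (hs : LocallyFiniteSet s) :
    s.Countable := by
  choose U hU hf using hs
  obtain ⟨t, ht, hcov⟩ := TopologicalSpace.countable_cover_nhds hU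
  have : s = ⋃ x ∈ t, s ∩ U x := by
    rw [← Set.inter_iUnion₂, hcov, Set.inter_univ]
  rw [this]
  exact ht.biUnion fun x _ => (hf x).countable

theorem supportPP_apply_eq_zero_iff {d : ℕ} {Ω : Type*} {η : Ω → Measure (Rd d)} {ω : Ω}
    (hs : {x | η ω {x} ≠ 0}.Countable) (t : Set (Rd d)) :
    supportPP η ω t = 0 ↔ ∀ x ∈ t, η ω {x} = 0 := by
  rw [supportPP, Measure.restrict_apply' hs.measurableSet, Measure.count_eq_zero_iff,
    Set.eq_empty_iff_forall_notMem]
  simp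

/-- The mass `μ` allocated into `C` is the sum of the masses of the cells of the atoms of `ν` in `C`,
when almost no mass is allocated to points that are not atoms. -/
theorem measure_alloc_eq_tsum {d : ℕ} {μ ν : Measure (Rd d)} {t : Rd d → Option (Rd d)}
    (ht : Measurable t) (hc : {x | ν {x} ≠ 0}.Countable)
    (h0 : μ {z | ∃ y, t z = some y ∧ ν {y} = 0} = 0) (C : Set (Rd d)) :
    μ {z | t z ≠ none ∧ (t z).getD 0 ∈ C} =
      ∑' y : ↥({x | ν {x} ≠ 0} ∩ C), μ {z | t z = some (y : Rd d)} := by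
  have hc' : ({x | ν {x} ≠ 0} ∩ C).Countable := hc.mono Set.inter_subset_left
  rw [← measure_biUnion hc' (f := fun y => {z | t z = some y})]
  · refine measure_congr (Filter.eventuallyEq_set.2 ?_)
    filter_upwards [measure_eq_zero_iff_ae_notMem.1 h0] with z hz
    cases hh : t z with
    | none => simp [hh]
    | some y =>
      have : ν {y} ≠ 0 := fun h => hz ⟨y, hh, h⟩
      simp [hh, this]
  · intro y _ y' _ hyy
    refine Set.disjoint_left.2 fun z h h' => hyy ?_
    exact Option.some_injective _ ((show t z = some y from h).symm.trans h')
  · intro y _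
    refine ht (show MeasurableSet (some ⁻¹' ({some y} : Set (Option (Rd d)))) from ?_)
    convert measurableSet_singleton y
    ext; simp

theorem measure_eq_tsum_atoms {d : ℕ} {ν : Measure (Rd d)} (hc : {x | ν {x} ≠ 0}.Countable)
    (hd : ∃ s : Set (Rd d), s.Countable ∧ ν sᶜ = 0) (C : Set (Rd d)) :
    ν C = ∑' y : ↥({x | ν {x} ≠ 0} ∩ C), ν {(y : Rd d)} := by
  obtain ⟨s, hs, hs0⟩ := hd
  have hc' : ({x | ν {x} ≠ 0} ∩ C).Countable := hc.mono Set.inter_subset_left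
  rw [← measure_biUnion hc' (f := fun y => {y}), Set.biUnion_of_singleton]
  · have hnull : ν {x | ν {x} ≠ 0}ᶜ = 0 := by
      have h1 : ν (⋃ y ∈ s \ {x | ν {x} ≠ 0}, {y}) = 0 :=
        (measure_biUnion_null_iff (hs.mono Set.sdiff_subset)).2 fun y hy => by
          simpa using hy.2
      refine measure_mono_null ?_ (measure_union_null hs0 h1)
      intro x hx
      by_cases hxs : x ∈ s
      · exact Or.inr (Set.mem_biUnion (x := x) ⟨hxs, hx⟩ rfl)
      · exact Or.inl hxs
    refine measure_congr (Filter.eventuallyEq_set.2 ?_)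
    filter_upwards [measure_eq_zero_iff_ae_notMem.1 hnull] with z hz
    have : z ∈ {x | ν {x} ≠ 0} := by simpa using hz
    exact ⟨fun h => ⟨this, h⟩, fun h => h.2⟩
  · intro y _ y' _ hyy
    simpa [Function.onFun] using hyy
  · intro y _
    exact measurableSet_singleton y

/-! ### The intensity of the allocated mass -/

/-- **Proposition 3 (second part).** If `ξ` and `η` are jointly stationary and
ergodic random measures on `ℝ^d` with positive finite intensities, `η` discrete
with a.s. locally finite support whose support point process `η*` has positive
finite intensity, and the allocation `τ` has appetite `α` for some
`α ∈ (0, λ_ξ λ_η⁻¹]`, then `λ_ξ · P_ξ(τ(0) ≠ ∞) = α λ_η`. -/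
theorem intensity_mul_palmProb_eq_of_hasAppetite
    {d : ℕ} {Ω : Type*} [MeasurableSpace Ω] (P : Measure Ω) [IsProbabilityMeasure P]
    (θ : Rd d → Ω → Ω) (ξ η : Ω → Measure (Rd d))
    (hflow : IsMeasurableFlow θ) (hstat : IsStationary P θ) (herg : IsErgodicFlow P θ)
    (hξ : IsRandomMeasure P ξ) (hη : IsRandomMeasure P η)
    (hξinv : IsFlowInvariant P θ ξ) (hηinv : IsFlowInvariant P θ η)
    (hξpos : 0 < intensity P ξ) (hξfin : intensity P ξ < ∞)
    (hηpos : 0 < intensity P η) (hηfin : intensity P η < ∞)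
    (hηdisc : IsDiscreteRM P η)
    (hηlocfin : ∀ᵐ ω ∂P, LocallyFiniteSet {x : Rd d | η ω {x} ≠ 0})
    (hstarpos : 0 < intensity P (supportPP η)) (hstarfin : intensity P (supportPP η) < ∞)
    (τ : Ω → Rd d → Option (Rd d)) (hτ : IsAllocation P θ τ)
    (α : ℝ≥0∞) (hα0 : 0 < α) (hα1 : α ≤ intensity P ξ * (intensity P η)⁻¹)
    (happ : HasAppetite P ξ η τ α) :
    intensity P ξ * palmProb P θ ξ {ω | τ ω 0 ≠ none} = α * intensity P η := by
  obtain ⟨κ, hκs, hκξ⟩ := exists_sfinite_kernel hξ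
  obtain ⟨hτm, hτe⟩ := hτ
  obtain ⟨happ1, happ2, happ3⟩ := happ
  have hmp : ∀ x, MeasurePreserving (θ x) P P := fun x =>
    ⟨hflow.measurable.comp measurable_prodMk_left, hstat x⟩
  have hκinv : ∀ x, ∀ᵐ ω ∂P, κ (θ x ω) = (κ ω).map (fun y => y - x) := by
    intro x
    filter_upwards [hξinv x, hκξ, (hmp x).quasiMeasurePreserving.ae hκξ] with ω h1 h2 h3
    rw [h2, h3, h1]
  set D : Set (Ω × Rd d) := {p | τ p.1 p.2 ≠ none} with hDdef
  have hD : MeasurableSet D := hτm measurableSet_option_none.compl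
  set σ : Ω × Rd d → Rd d := fun p => (τ p.1 p.2).getD 0 with hσdef
  have hσ : Measurable σ := (measurable_getD 0).comp hτm
  have hQ := measurableSet_unitCube d
  have hτω : ∀ ω, Measurable (τ ω) := fun ω => hτm.comp measurable_prodMk_left
  have hequiv : ∀ᵐ p ∂(P ⊗ₘ κ), ∀ x, ((θ x p.1, p.2 - x) ∈ D ↔ p ∈ D) ∧
      (p ∈ D → σ (θ x p.1, p.2 - x) = σ p - x) := by
    -- `ae_compProd_of_ae_fst` needs a measurable event: enlarge the exceptional null set.
    obtain ⟨N, hN, hNm, hN0⟩ := exists_measurable_superset_of_null hτe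
    have h1 : ∀ᵐ ω ∂P, ω ∉ N := measure_eq_zero_iff_ae_notMem.1 hN0
    filter_upwards [Measure.ae_compProd_of_ae_fst κ hNm.compl h1] with p hp x
    have h2 : ∀ x y, τ (θ y p.1) (x - y) = Option.map (fun z => z - y) (τ p.1 x) := by
      by_contra h
      exact hp (hN h)
    simp only [hDdef, hσdef, Set.mem_ofPred_eq, h2]
    cases τ p.1 p.2 <;> simp
  have hmt := mass_transport (fun x => measurePreserving_skew hflow hstat κ hκinv x) hD hσ
    hequiv hQ hQ
  rw [volume_unitCube, mul_one, mul_one] at hmt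
  have hE1 : MeasurableSet {p : Ω × Rd d | p ∈ D ∧ p.2 ∈ unitCube d} :=
    hD.inter (measurable_snd hQ)
  have hE2 : MeasurableSet {p : Ω × Rd d | p ∈ D ∧ σ p ∈ unitCube d} := hD.inter (hσ hQ)
  rw [Measure.compProd_apply hE1, Measure.compProd_apply hE2] at hmt
  have hpalm : intensity P ξ * palmProb P θ ξ {ω | τ ω 0 ≠ none} =
      ∫⁻ ω, κ ω (Prod.mk ω ⁻¹' {p | p ∈ D ∧ p.2 ∈ unitCube d}) ∂P := by
    rw [palmProb, volume_unitCube, inv_one, mul_one, ← mul_assoc,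
      ENNReal.mul_inv_cancel hξpos.ne' hξfin.ne, one_mul]
    refine lintegral_congr_ae ?_
    filter_upwards [hκξ, hτe] with ω h1 h2
    have hDω : MeasurableSet {z | τ ω z ≠ none} := hτω ω measurableSet_option_none.compl
    have h3 : ∀ x, Set.indicator {ω | τ ω 0 ≠ none} (fun _ => (1 : ℝ≥0∞)) (θ x ω) =
        Set.indicator {z | τ ω z ≠ none} (fun _ => 1) x := by
      intro x
      have h4 := h2 x x
      rw [sub_self] at h4
      simp only [Set.indicator_apply, Set.mem_ofPred_eq, h4]
      by_cases h5 : τ ω x = none <;> simp [h5]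
    simp_rw [h3]
    rw [lintegral_indicator_const hDω, one_mul, Measure.restrict_apply hDω, h1]
    rfl
  have hle : ∀ᵐ ω ∂P, κ ω (Prod.mk ω ⁻¹' {p | p ∈ D ∧ σ p ∈ unitCube d}) ≤
      α * η ω (unitCube d) := by
    filter_upwards [hκξ, happ1, happ2, hηlocfin, hηdisc] with ω h1 h2 h3 h4 h5
    have hc := h4.countable
    rw [supportPP_apply_eq_zero_iff hc] at h3
    rw [measure_eq_tsum_atoms hc h5, ← ENNReal.tsum_mul_left, h1]
    refine (measure_alloc_eq_tsum (hτω ω) hc h2 _).trans_le (ENNReal.tsum_le_tsum fun y => ?_)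
    exact not_lt.1 fun h => y.2.1 (h3 y h)
  -- The event that some mass stays unallocated; it is invariant up to null sets.
  let A : Set Ω := {ω | 0 < κ ω {z | τ ω z = none}}
  have hAmeas : Measurable fun ω => κ ω {z | τ ω z = none} :=
    Kernel.measurable_kernel_prodMk_left (κ := κ) (hτm measurableSet_option_none)
  have hA : MeasurableSet A := hAmeas measurableSet_Ioi
  have hAinv : ∀ x, ∀ᵐ ω ∂P, θ x ω ∈ A ↔ ω ∈ A := by
    intro x
    filter_upwards [hκinv x, hτe] with ω h1 h2
    have h3 : κ (θ x ω) {z | τ (θ x ω) z = none} = κ ω {z | τ ω z = none} := by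
      have hnone : MeasurableSet {z | τ (θ x ω) z = none} := hτω _ measurableSet_option_none
      rw [h1, Measure.map_apply (by fun_prop) hnone]
      congr 1
      ext z
      simp [h2 z x]
    change 0 < κ (θ x ω) {z | τ (θ x ω) z = none} ↔ 0 < κ ω {z | τ ω z = none}
    rw [h3]
  have hsum : ∫⁻ ω, α * η ω (unitCube d) ∂P = α * intensity P η :=
    lintegral_const_mul _ (hη.1 _ hQ)
  rw [hpalm]
  rcases prob_eq_zero_or_one_of_ae_invariant hflow herg hA hAinv with hPA | hPA
  · -- All mass is allocated, so the left side is `λ_ξ`, which is at least `α λ_η`.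
    refine le_antisymm ?_ ?_
    · rw [hmt, ← hsum]
      exact lintegral_mono_ae hle
    · calc α * intensity P η ≤ intensity P ξ * (intensity P η)⁻¹ * intensity P η := by gcongr
        _ = intensity P ξ := by
          rw [mul_assoc, ENNReal.inv_mul_cancel hηpos.ne' hηfin.ne, mul_one]
        _ = _ := by
          refine lintegral_congr_ae ?_
          filter_upwards [hκξ, measure_eq_zero_iff_ae_notMem.1 hPA] with ω h1 h2
          have h3 : κ ω {z | τ ω z = none} = 0 := by simpa [A] using h2
          rw [← h1]
          refine measure_congr (Filter.eventuallyEq_set.2 ?_)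
          filter_upwards [measure_eq_zero_iff_ae_notMem.1 h3] with z hz
          exact ⟨fun h => ⟨hz, h⟩, fun h => h.2⟩
  · -- Unallocated mass exists a.s., so by the third appetite condition every atom is sated.
    rw [hmt, ← hsum]
    refine lintegral_congr_ae ?_
    have hAae : ∀ᵐ ω ∂P, ω ∈ A := (prob_compl_eq_zero_iff hA).2 hPA
    filter_upwards [hκξ, happ1, happ2, hηlocfin, hηdisc, hAae,
      measure_eq_zero_iff_ae_notMem.1 happ3] with ω h1 h2 h3 h4 h5 h6 h7
    have hc := h4.countable
    have h8 : supportPP η ω {x | ξ ω (allocCell τ ω x) < α * η ω {x}} = 0 := by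
      by_contra h
      exact h7 ⟨h1 ▸ h6, pos_iff_ne_zero.2 h⟩
    rw [supportPP_apply_eq_zero_iff hc] at h3 h8
    rw [measure_eq_tsum_atoms hc h5, ← ENNReal.tsum_mul_left, h1]
    refine (measure_alloc_eq_tsum (hτω ω) hc h2 _).trans (tsum_congr fun y => ?_)
    exact le_antisymm (not_lt.1 fun h => y.2.1 (h3 y h)) (not_lt.1 fun h => y.2.1 (h8 y h))

end Paper
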